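/- Theorem 6.1(vi): with the notation of the context, Σ_α 𝒳_{e_α}·𝒴_{e_α} = n·(𝓛_e² + μ²). -/

import Mathlib

open Matrix
open scoped ComplexOrder

/-- The Jordan product of two complex matrices. -/
noncomputable def jordanProd {n : ℕ} (a b : Matrix (Fin n) (Fin n) ℂ) :
    Matrix (Fin n) (Fin n) ℂ :=
  (1 / 2 : ℂ) • (a * b + b * a)

/-- The Jordan triple product `{uvw} = u∘(v∘w) − v∘(u∘w) + (u∘v)∘w`. -/
noncomputable def jTriple {n : ℕ} (u v w : Matrix (Fin n) (Fin n) ℂ) :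
    Matrix (Fin n) (Fin n) ℂ :=
  jordanProd u (jordanProd v w) - jordanProd v (jordanProd u w)
    + jordanProd (jordanProd u v) w

/-- The real inner product `⟨u|v⟩ = (1/n)·Re(tr(u·v))`. -/
noncomputable def jInner {n : ℕ} (u v : Matrix (Fin n) (Fin n) ℂ) : ℝ :=
  (1 / n : ℝ) * ((u * v).trace).re

/-- `𝒴_u = ⟨u|x⟩`. -/
noncomputable def Yfun {n : ℕ} (x u : Matrix (Fin n) (Fin n) ℂ) : ℝ :=
  jInner u x

/-- `𝓛_u = ⟨u∘x|π⟩`. -/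
noncomputable def Lfun {n : ℕ} (x p u : Matrix (Fin n) (Fin n) ℂ) : ℝ :=
  jInner (jordanProd u x) p

/-- `𝓛_{u,v} = ⟨u∘(v∘x) − v∘(u∘x)|π⟩ − μ·i·tr(x·[u,v])/(2·tr x)`. -/
noncomputable def LLfun {n : ℕ} (μ : ℝ) (x p u v : Matrix (Fin n) (Fin n) ℂ) : ℝ :=
  jInner (jordanProd u (jordanProd v x) - jordanProd v (jordanProd u x)) p
    - μ * (Complex.I * (x * (u * v - v * u)).trace).re / (2 * (x.trace).re)

/-- `𝒳_u = ⟨x|{πuπ}⟩ + n·μ²·Re(tr(x·u))/(tr x)² − μ·i·tr(x·[u,π])/(tr x)`. -/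
noncomputable def Xfun {n : ℕ} (μ : ℝ) (x p u : Matrix (Fin n) (Fin n) ℂ) : ℝ :=
  jInner x (jTriple p u p) + (n : ℝ) * μ ^ 2 * ((x * u).trace).re / ((x.trace).re) ^ 2
    - μ * (Complex.I * (x * (u * p - p * u)).trace).re / (x.trace).re

/-!
Since `x` is a combination of the `e_α` with coefficients `𝒴_{e_α}` and `u ↦ 𝒳_u` is linear, the
left-hand side is `𝒳_x`. A matrix of rank one satisfies `x·m·x = tr(x·m) x`; hence
`tr(x·π·x·π) = (tr(x·π))²` and `tr(x·x) = (tr x)²`, where `tr x ≠ 0` because `x·x = tr(x) x` and a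
nonzero hermitian matrix has nonzero square. So the first two terms of `𝒳_x` are `n·𝓛_e²` and
`n·μ²`, while the commutator term vanishes by cyclicity of the trace.
-/

section RankOne

variable {K m n : Type*} [Field K] [Fintype n]

theorem exists_eq_vecMulVec_of_rank_le_one {A : Matrix m n K} (hA : A.rank ≤ 1) :
    ∃ (a : m → K) (b : n → K), A = vecMulVec a b := by
  classical
  obtain ⟨a, ha⟩ := finrank_le_one_iff.mp hA
  choose b hb using fun j => ha ⟨A.mulVecLin (Pi.single j 1), LinearMap.mem_range_self _ _⟩
  refine ⟨a, b, ?_⟩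
  ext i j
  have hcol : b j * a.1 i = A i j := by
    simpa using congrFun (congrArg Subtype.val (hb j)) i
  rw [vecMulVec_apply, mul_comm, hcol]

theorem mul_mul_eq_trace_smul_of_rank_le_one [Fintype m] {A : Matrix m n K} (hA : A.rank ≤ 1)
    (B : Matrix n m K) : A * B * A = (A * B).trace • A := by
  obtain ⟨a, b, rfl⟩ := exists_eq_vecMulVec_of_rank_le_one hA
  rw [vecMulVec_mul, vecMulVec_mul_vecMulVec, trace_vecMulVec, dotProduct_comm, vecMulVec_smul]

theorem trace_mul_mul_mul_of_rank_le_one [Fintype m] {A : Matrix m n K} (hA : A.rank ≤ 1)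
    (B : Matrix n m K) : (A * B * (A * B)).trace = (A * B).trace ^ 2 := by
  rw [← Matrix.mul_assoc, mul_mul_eq_trace_smul_of_rank_le_one hA, smul_mul, trace_smul,
    smul_eq_mul, sq]

theorem trace_eq_zero_iff_of_rank_le_one [StarRing K] [PartialOrder K] [StarOrderedRing K]
    {A : Matrix n n K} (hA : A.IsHermitian) (hrank : A.rank ≤ 1) : A.trace = 0 ↔ A = 0 := by
  classical
  refine ⟨fun htr => ?_, fun h => by rw [h, trace_zero]⟩
  have hsq : A * A = A.trace • A := by
    simpa only [mul_one] using mul_mul_eq_trace_smul_of_rank_le_one hrank 1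
  rw [← conjTranspose_mul_self_eq_zero, hA.eq, hsq, htr, zero_smul]

end RankOne

theorem isSelfAdjoint_trace_mul {R n : Type*} [CommSemiring R] [StarRing R] [Fintype n]
    {A B : Matrix n n R} (hA : A.IsHermitian) (hB : B.IsHermitian) :
    IsSelfAdjoint (A * B).trace := by
  rw [IsSelfAdjoint, ← trace_conjTranspose, conjTranspose_mul, hA.eq, hB.eq, trace_mul_comm]

theorem trace_mul_commutator_self {R n : Type*} [CommRing R] [Fintype n] (A B : Matrix n n R) :
    (A * (A * B - B * A)).trace = 0 := by
  rw [Matrix.mul_sub, trace_sub, ← Matrix.mul_assoc A B A, trace_mul_comm (A * B) A, sub_self]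

section Jordan

variable {n : ℕ}

theorem isHermitian_jordanProd {a b : Matrix (Fin n) (Fin n) ℂ} (ha : a.IsHermitian)
    (hb : b.IsHermitian) : (jordanProd a b).IsHermitian := by
  simp [jordanProd, Matrix.IsHermitian, ha.eq, hb.eq, add_comm]

theorem one_jordanProd (a : Matrix (Fin n) (Fin n) ℂ) : jordanProd 1 a = a := by
  rw [jordanProd, one_mul, mul_one]
  module

theorem jTriple_self_right (p u : Matrix (Fin n) (Fin n) ℂ) : jTriple p u p = p * u * p := by
  simp only [jTriple, jordanProd, mul_add, add_mul, Matrix.mul_smul, Matrix.smul_mul, ← mul_assoc]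
  module

theorem Lfun_one (x p : Matrix (Fin n) (Fin n) ℂ) : Lfun x p 1 = jInner x p := by
  rw [Lfun, one_jordanProd]

theorem isLinearMap_Xfun (μ : ℝ) (x p : Matrix (Fin n) (Fin n) ℂ) :
    IsLinearMap ℝ (Xfun μ x p) where
  map_add u v := by
    simp only [Xfun, jTriple_self_right, jInner, mul_add, add_mul, mul_sub, trace_add, trace_sub,
      Complex.add_re, Complex.sub_re]
    ring
  map_smul c u := by
    simp only [Xfun, jTriple_self_right, jInner, mul_sub, Matrix.smul_mul, mul_smul_comm,
      trace_sub, trace_smul, Complex.sub_re, Complex.smul_re, smul_eq_mul]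
    ring

theorem sum_Xfun_mul_Yfun {ι : Type*} [Fintype ι] (μ : ℝ) (p : Matrix (Fin n) (Fin n) ℂ)
    {x : Matrix (Fin n) (Fin n) ℂ} {E : ι → Matrix (Fin n) (Fin n) ℂ}
    (hE : x = ∑ α, (jInner (E α) x : ℂ) • E α) :
    ∑ α, Xfun μ x p (E α) * Yfun x (E α) = Xfun μ x p x := by
  let X := (isLinearMap_Xfun μ x p).mk'
  calc ∑ α, Xfun μ x p (E α) * Yfun x (E α)
      = ∑ α, X (jInner (E α) x • E α) :=
        Finset.sum_congr rfl fun α _ => by rw [map_smul, smul_eq_mul, mul_comm]; rfl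
    _ = X (∑ α, jInner (E α) x • E α) := (map_sum X _ _).symm
    _ = X x := by simp only [Complex.coe_smul] at hE; rw [← hE]

theorem Xfun_self (μ : ℝ) {x p : Matrix (Fin n) (Fin n) ℂ} (hx : x.IsHermitian)
    (hrank : x.rank = 1) (hp : p.IsHermitian) :
    Xfun μ x p x = n * (jInner x p ^ 2 + μ ^ 2) := by
  have hx0 : x ≠ 0 := by
    rintro rfl
    simp at hrank
  have hn : (n : ℝ) ≠ 0 := by
    refine Nat.cast_ne_zero.mpr ?_
    rintro rfl
    exact hx0 (Subsingleton.elim _ _)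
  have htr : IsSelfAdjoint x.trace := by
    simpa only [mul_one] using isSelfAdjoint_trace_mul hx isHermitian_one
  obtain ⟨t, ht⟩ : ∃ t : ℝ, (t : ℂ) = x.trace := ⟨_, Complex.conj_eq_iff_re.mp htr⟩
  obtain ⟨s, hs⟩ : ∃ s : ℝ, (s : ℂ) = (x * p).trace :=
    ⟨_, Complex.conj_eq_iff_re.mp (isSelfAdjoint_trace_mul hx hp)⟩
  have ht0 : t ≠ 0 := by
    rintro rfl
    exact hx0 ((trace_eq_zero_iff_of_rank_le_one hx hrank.le).mp (by simpa using ht.symm))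
  have hquartic : (x * (p * x * p)).trace = (s ^ 2 : ℝ) := by
    rw [mul_assoc p, ← mul_assoc, trace_mul_mul_mul_of_rank_le_one hrank.le, ← hs,
      Complex.ofReal_pow]
  have hsq : (x * x).trace = (t ^ 2 : ℝ) := by
    simpa [ht] using trace_mul_mul_mul_of_rank_le_one hrank.le 1
  rw [Xfun, jTriple_self_right, jInner, jInner, hquartic, hsq,
    trace_mul_commutator_self, ← ht, ← hs]
  simp only [Complex.ofReal_re, mul_zero, Complex.zero_re, zero_div, sub_zero]
  field_simp

end Jordan

theorem quadratic_relation_vi_general {ι : Type*} [Fintype ι] {n : ℕ} (μ : ℝ)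
    {x p : Matrix (Fin n) (Fin n) ℂ} (hx : x.IsHermitian) (hrank : x.rank = 1)
    (hp : p.IsHermitian) {E : ι → Matrix (Fin n) (Fin n) ℂ}
    (hE : x = ∑ α, (jInner (E α) x : ℂ) • E α) :
    ∑ α, Xfun μ x p (E α) * Yfun x (E α) = n * (Lfun x p 1 ^ 2 + μ ^ 2) := by
  rw [sum_Xfun_mul_Yfun μ p hE, Xfun_self μ hx hrank hp, Lfun_one]

theorem quadratic_relation_vi
    (n : ℕ) (hn : 2 ≤ n) (μ : ℝ)
    (x : Matrix (Fin n) (Fin n) ℂ)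
    (hherm : x.IsHermitian) (hpsd : x.PosSemidef) (hrank : x.rank = 1)
    (p w : Matrix (Fin n) (Fin n) ℂ) (hw : w.IsHermitian) (hp : p = jordanProd x w)
    (E : Fin (n ^ 2) → Matrix (Fin n) (Fin n) ℂ)
    (hEherm : ∀ α, (E α).IsHermitian)
    (hEorth : ∀ α β, jInner (E α) (E β) = if α = β then 1 else 0)
    (hEspan : ∀ u : Matrix (Fin n) (Fin n) ℂ, u.IsHermitian →
      u = ∑ α, (jInner (E α) u : ℂ) • E α)
    :
    (∑ α, Xfun μ x p (E α) * Yfun x (E α)) = (n : ℝ) * ((Lfun x p 1) ^ 2 + μ ^ 2) := by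
  exact quadratic_relation_vi_general μ hherm hrank (hp ▸ isHermitian_jordanProd hherm hw)
    (hEspan x hherm)
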